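/- arXiv:2007.05935 — 3 statements merged into one kernel-verified Lean document; each statement's English description precedes it below -/
import Mathlib

section
/- Assume (i) for every f:[ω₂]²→ω₁ there exists A⊆ω₂ of order type ω₁ such that f''[A]² is countable (a consequence of Chang's Conjecture), and (ii) ω₁ →^poly (ω₁)²_{<ω₁-t-bdd}. Then ω₂ →^poly (ω₁)²_{ω-bdd}: every normal ω-bounded coloring f:[ω₂]²→ω₂ admits an f-rainbow set of order type ω₁. -/
open Set Cardinal Ordinal

universe u

/-- `A` has order type `θ`: there is an order isomorphism from `Iio θ` onto `A`. -/
def HasOType (A : Set Ordinal.{u}) (θ : Ordinal.{u}) : Prop :=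
  Nonempty (Set.Iio θ ≃o A)

/-- The order type of `A` is at most `γ`: `A` order-embeds into `Iio γ`. -/
def OTypeLE (A : Set Ordinal.{u}) (γ : Ordinal.{u}) : Prop :=
  Nonempty (A ↪o Set.Iio γ)

/-- `A` is `f`-rainbow: `f` is injective on increasing pairs from `A`. -/
def IsRainbow (f : Ordinal → Ordinal → Ordinal) (A : Set Ordinal) : Prop :=
  ∀ α ∈ A, ∀ β ∈ A, ∀ γ ∈ A, ∀ δ ∈ A,
    α < β → γ < δ → f α β = f γ δ → α = γ ∧ β = δ

/-- `f` is a normal coloring on pairs below `κ`: equal colors force equal top points. -/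
def IsNormalColoring (f : Ordinal → Ordinal → Ordinal) (κ : Ordinal) : Prop :=
  ∀ α β γ δ : Ordinal, α < β → β < κ → γ < δ → δ < κ → f α β = f γ δ → β = δ

/-- `f` is 2-bounded: every fiber of `f` on pairs below `κ` has at most two elements. -/
def TwoBounded (f : Ordinal → Ordinal → Ordinal) (κ : Ordinal) : Prop :=
  ∀ ξ : Ordinal, {p : Ordinal × Ordinal | p.1 < p.2 ∧ p.2 < κ ∧ f p.1 p.2 = ξ}.encard ≤ 2

/-- `f` is `<ω`-bounded: every fiber of `f` on pairs below `κ` is finite. -/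
def FinBounded (f : Ordinal → Ordinal → Ordinal) (κ : Ordinal) : Prop :=
  ∀ ξ : Ordinal, {p : Ordinal × Ordinal | p.1 < p.2 ∧ p.2 < κ ∧ f p.1 p.2 = ξ}.Finite

/-- `f` is `ω`-bounded: every fiber of `f` on pairs below `κ` is countable. -/
def OmegaBounded (f : Ordinal → Ordinal → Ordinal) (κ : Ordinal) : Prop :=
  ∀ ξ : Ordinal, {p : Ordinal × Ordinal | p.1 < p.2 ∧ p.2 < κ ∧ f p.1 p.2 = ξ}.Countable

/-- `A` is a closed set of ordinals: any nonzero `α` below `sup A` which is the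
supremum of the elements of `A` below it belongs to `A`. -/
def IsClosedSet (A : Set Ordinal) : Prop :=
  ∀ α : Ordinal, α < sSup A → α ≠ 0 → sSup (A ∩ Set.Iio α) = α → α ∈ A

/-- `C` is club in `δ`: a subset of `δ`, unbounded in `δ`, and closed below `δ`. -/
def IsClubIn (C : Set Ordinal) (δ : Ordinal) : Prop :=
  C ⊆ Set.Iio δ ∧ (∀ α < δ, ∃ β ∈ C, α ≤ β) ∧
  ∀ α : Ordinal, α < δ → α ≠ 0 → sSup (C ∩ Set.Iio α) = α → α ∈ C

/-- `A` is stationary in `δ`: it meets every club in `δ`. -/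
def IsStationaryIn (A : Set Ordinal) (δ : Ordinal) : Prop :=
  ∀ C : Set Ordinal, IsClubIn C δ → (A ∩ C).Nonempty

/-- `f` is `<bd`-type bounded on pairs below `κ`: some `γ < bd` bounds the order
type of every color class `t_{ηβ} = {ξ < β | f ξ β = f η β}`. -/
def TypeBounded (f : Ordinal → Ordinal → Ordinal) (κ bd : Ordinal) : Prop :=
  ∃ γ < bd, ∀ η β : Ordinal, η < β → β < κ →
    OTypeLE {ξ : Ordinal | ξ < β ∧ f ξ β = f η β} γ

/-- `f` is `<bd`-type bounded relative to the set `A`. -/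
def TypeBoundedOn (f : Ordinal → Ordinal → Ordinal) (A : Set Ordinal) (bd : Ordinal) : Prop :=
  ∃ γ < bd, ∀ η ∈ A, ∀ β ∈ A, η < β →
    OTypeLE {ξ : Ordinal | ξ ∈ A ∧ ξ < β ∧ f ξ β = f η β} γ

/-! Let `f` be an `ω`-bounded normal coloring. Every color class `t_{αβ} = {ξ < β | f ξ β = f α β}`
is countable, so `(α, β) ↦ otp t_{αβ}` is a coloring with values below `ω₁`. On a set `A` of order
type `ω₁` where it takes only countably many values, these are bounded by a single `γ < ω₁`, so `f`
is `<ω₁`-type bounded relative to `A`. Enumerating `A` increasingly, and renaming the at most `ℵ₁`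
colors of its pairs by ordinals below `ω₁`, turns `f` into a normal `<ω₁`-type bounded coloring on
`ω₁`, and the enumeration maps a rainbow set for that coloring onto a rainbow set for `f`. -/

universe v w v₂ w₂

/-- The consequence of Chang's Conjecture used as hypothesis (i), for pairs below `κ`: every
coloring `[κ]² → ω₁` takes only countably many values on some set of order type `ω₁`. Colors may
live in a different universe from `κ`. -/
def ChangProperty (κ : Ordinal.{v}) : Prop :=
  ∀ f : Ordinal.{v} → Ordinal.{v} → Ordinal.{w},
    (∀ α β : Ordinal, α < β → β < κ → f α β < (ℵ_ 1).ord) →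
    ∃ A : Set Ordinal, A ⊆ Iio κ ∧ HasOType A (ℵ_ 1).ord ∧
      {ξ : Ordinal | ∃ α ∈ A, ∃ β ∈ A, α < β ∧ f α β = ξ}.Countable

/-- The relation `κ →^poly (θ)²_{<bd-t-bdd}`, for colorings with values below `μ`. The paper has
`μ = κ`; it is a separate parameter so that colors may live in a different universe from `κ`. -/
def TypeBoundedPolyArrow (κ θ bd : Ordinal.{v}) (μ : Ordinal.{w}) : Prop :=
  ∀ f : Ordinal.{v} → Ordinal.{v} → Ordinal.{w},
    (∀ α β : Ordinal, α < β → β < κ → f α β < μ) →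
    IsNormalColoring f κ → TypeBounded f κ bd →
    ∃ A : Set Ordinal, A ⊆ Iio κ ∧ HasOType A θ ∧ IsRainbow f A

theorem nonempty_Iio_orderIso_of_lift_eq {a : Ordinal.{v}} {b : Ordinal.{w}}
    (h : Ordinal.lift.{w} a = Ordinal.lift.{v} b) : Nonempty (Iio a ≃o Iio b) := by
  rw [← type_toType a, ← type_toType b] at h
  obtain ⟨e⟩ := lift_type_eq.{v, w, 0}.1 h
  exact ⟨ToType.mk.trans ((OrderIso.ofRelIsoLT e).trans ToType.mk.symm)⟩

theorem nonempty_Iio_orderEmbedding_of_lift_le {a : Ordinal.{v}} {b : Ordinal.{w}}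
    (h : Ordinal.lift.{w} a ≤ Ordinal.lift.{v} b) : Nonempty (Iio a ↪o Iio b) := by
  rw [← type_toType a, ← type_toType b] at h
  obtain ⟨e⟩ := lift_type_le.{v, w, 0}.1 h
  exact ⟨ToType.mk.toOrderEmbedding.trans
    (e.toOrderEmbedding.trans ToType.mk.symm.toOrderEmbedding)⟩

theorem exists_strictMonoOn_mapsTo {α : Type v} {β : Type w} [Preorder α] [Preorder β] [Nonempty β]
    {s : Set α} {t : Set β} (e : s ↪o t) : ∃ H : α → β, StrictMonoOn H s ∧ MapsTo H s t := by
  obtain ⟨H, hH⟩ := Subtype.surjective_restrict (β := fun _ ↦ β) (· ∈ s) fun x ↦ e x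
  have hHe (x) (hx : x ∈ s) : H x = e ⟨x, hx⟩ := congrFun hH ⟨x, hx⟩
  refine ⟨H, fun x hx y hy hxy ↦ ?_, fun x hx ↦ ?_⟩
  · rw [hHe x hx, hHe y hy]
    exact e.strictMono hxy
  · rw [hHe x hx]
    exact (e ⟨x, hx⟩).2

theorem exists_injOn_mapsTo_Iio_ord {α : Type v} {s : Set α} {c : Cardinal.{w}}
    (hs : Cardinal.lift.{w} #s ≤ Cardinal.lift.{v} c) :
    ∃ code : α → Ordinal.{w}, InjOn code s ∧ MapsTo code s (Iio c.ord) := by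
  rw [← mk_ord_toType c] at hs
  obtain ⟨e⟩ := lift_mk_le'.1 hs
  obtain ⟨code, hcode⟩ := Subtype.surjective_restrict (β := fun _ ↦ Ordinal) (· ∈ s)
    fun x ↦ ToType.mk.symm (e x)
  have hcode_eq (x) (hx : x ∈ s) : code x = ToType.mk.symm (e ⟨x, hx⟩) := congrFun hcode ⟨x, hx⟩
  refine ⟨code, fun x hx y hy hxy ↦ ?_, fun x hx ↦ ?_⟩
  · rw [hcode_eq x hx, hcode_eq y hy] at hxy
    exact congrArg Subtype.val (e.injective (ToType.mk.symm.injective (Subtype.ext hxy)))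
  · rw [hcode_eq x hx]
    exact (ToType.mk.symm (e ⟨x, hx⟩)).2

theorem lift_mk_image2_self_le {α : Type v} {β : Type w} (f : α → α → β) {s : Set α}
    (hs : ℵ₀ ≤ #s) : Cardinal.lift.{v} #(image2 f s s) ≤ Cardinal.lift.{w} #s := by
  rw [← image_uncurry_prod]
  refine mk_image_le_lift.trans (Cardinal.lift_le.2 ?_)
  rw [mk_setProd, mul_eq_self hs]

theorem exists_lt_ord_aleph_one_mem_upperBounds {C : Set Ordinal.{v}} (hC : C.Countable)
    (hlt : C ⊆ Iio (ℵ_ 1).ord) : ∃ γ < (ℵ_ 1).ord, γ ∈ upperBounds C := by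
  have : Countable C := hC
  refine ⟨⨆ c : C, (c : Ordinal), ?_,
    fun ξ hξ ↦ Ordinal.le_iSup (fun c : C ↦ (c : Ordinal)) ⟨ξ, hξ⟩⟩
  rw [ord_aleph] at hlt ⊢
  exact iSup_lt_omega_one fun c ↦ hlt c.2

section OrderType

variable {A S : Set Ordinal.{v}} {θ γ : Ordinal.{v}} {T : Set Ordinal.{w}} {θ' δ : Ordinal.{w}}

theorem HasOType.image (hA : HasOType A θ) (hθ : Ordinal.lift.{w} θ = Ordinal.lift.{v} θ')
    {H : Ordinal.{v} → Ordinal.{w}} (hH : StrictMonoOn H A) : HasOType (H '' A) θ' := by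
  obtain ⟨e⟩ := nonempty_Iio_orderIso_of_lift_eq hθ
  obtain ⟨i⟩ := hA
  exact ⟨e.symm.trans (i.trans (hH.orderIso H A))⟩

theorem HasOType.exists_strictMonoOn_mapsTo (hA : HasOType A θ)
    (hθ : Ordinal.lift.{w} θ = Ordinal.lift.{v} θ') :
    ∃ H : Ordinal.{w} → Ordinal.{v}, StrictMonoOn H (Iio θ') ∧ MapsTo H (Iio θ') A := by
  obtain ⟨e⟩ := nonempty_Iio_orderIso_of_lift_eq hθ
  obtain ⟨i⟩ := hA
  exact _root_.exists_strictMonoOn_mapsTo (e.symm.trans i).toOrderEmbedding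

theorem HasOType.mk_eq (hA : HasOType A θ) : #A = Cardinal.lift.{v + 1} θ.card := by
  obtain ⟨i⟩ := hA
  rw [← mk_congr i.toEquiv, Cardinal.mk_Iio_ordinal]

theorem OTypeLE.of_strictMonoOn (hT : OTypeLE T δ)
    (hδ : Ordinal.lift.{v} δ ≤ Ordinal.lift.{w} γ)
    {H : Ordinal.{v} → Ordinal.{w}} (hH : StrictMonoOn H S) (hST : MapsTo H S T) : OTypeLE S γ := by
  obtain ⟨e⟩ := hT
  obtain ⟨j⟩ := nonempty_Iio_orderEmbedding_of_lift_le hδ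
  have hmono : StrictMono (hST.restrict H S T) := fun x y hxy ↦ hH x.2 y.2 hxy
  exact ⟨(OrderEmbedding.ofStrictMono _ hmono).trans (e.trans j)⟩

theorem exists_lt_ord_aleph_one_otypeLE (hS : S.Countable) : ∃ γ < (ℵ_ 1).ord, OTypeLE S γ := by
  have htype : typeLT S < Ordinal.lift.{v + 1} (ℵ_ 1 : Cardinal.{v}).ord := by
    rw [lift_ord, lift_aleph, lt_ord, card_type, Ordinal.lift_one, lt_aleph_one_iff]
    exact le_aleph0_iff_set_countable.2 hS
  obtain ⟨γ, hγ⟩ := mem_range_lift_of_le htype.le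
  rw [← hγ, Ordinal.lift_lt] at htype
  obtain ⟨e⟩ := type_eq.1 (hγ.symm.trans (type_lt_Iio γ).symm)
  exact ⟨γ, htype, ⟨(OrderIso.ofRelIsoLT e).toOrderEmbedding⟩⟩

end OrderType

theorem ChangProperty.of_lift_eq {κ : Ordinal.{v}} {κ' : Ordinal.{v₂}}
    (h : ChangProperty.{v, w} κ) (hκ : Ordinal.lift.{v₂} κ = Ordinal.lift.{v} κ') :
    ChangProperty.{v₂, w₂} κ' := by
  intro g hg
  obtain ⟨e⟩ := nonempty_Iio_orderIso_of_lift_eq hκ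
  obtain ⟨E, hE, hEκ⟩ := exists_strictMonoOn_mapsTo e.toOrderEmbedding
  obtain ⟨j⟩ := nonempty_Iio_orderIso_of_lift_eq
    (a := (ℵ_ 1 : Cardinal.{w₂}).ord) (b := (ℵ_ 1 : Cardinal.{w}).ord) (by simp)
  obtain ⟨J, hJ, hJω⟩ := exists_strictMonoOn_mapsTo j.toOrderEmbedding
  have hgE {α β : Ordinal} (hαβ : α < β) (hβ : β < κ) : g (E α) (E β) < (ℵ_ 1).ord :=
    hg _ _ (hE (hαβ.trans hβ) hβ hαβ) (hEκ hβ)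
  obtain ⟨A, hAκ, hA, hcount⟩ := h (fun α β ↦ J (g (E α) (E β)))
    fun α β hαβ hβ ↦ hJω (hgE hαβ hβ)
  have hEA : StrictMonoOn E A := hE.mono hAκ
  have hpair {ξ : Ordinal} : (∃ α ∈ E '' A, ∃ β ∈ E '' A, α < β ∧ g α β = ξ) →
      ∃ α ∈ A, ∃ β ∈ A, α < β ∧ g (E α) (E β) = ξ := by
    rintro ⟨_, ⟨α, hα, rfl⟩, _, ⟨β, hβ, rfl⟩, hαβ, hξ⟩
    exact ⟨α, hα, β, hβ, (hEA.lt_iff_lt hα hβ).1 hαβ, hξ⟩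
  refine ⟨E '' A, (hEκ.mono_left hAκ).image_subset, hA.image (by simp) hEA,
    MapsTo.countable_of_injOn (f := J) ?_ (hJ.injOn.mono ?_) hcount⟩
  · intro ξ hξ
    obtain ⟨α, hα, β, hβ, hαβ, rfl⟩ := hpair hξ
    exact ⟨α, hα, β, hβ, hαβ, rfl⟩
  · intro ξ hξ
    obtain ⟨_, _, β, hβ, hαβ, rfl⟩ := hpair hξ
    exact hgE hαβ (hAκ hβ)

section Coloring

variable {f : Ordinal.{v} → Ordinal.{v} → Ordinal.{w}} {κ : Ordinal.{v}} {A : Set Ordinal.{v}}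

theorem OmegaBounded.countable_colorClass (hf : OmegaBounded f κ) {β : Ordinal} (hβ : β < κ)
    (c : Ordinal) : {ξ | ξ < β ∧ f ξ β = c}.Countable := by
  refine ((hf c).image Prod.fst).mono ?_
  rintro ξ ⟨hξβ, hξ⟩
  exact ⟨(ξ, β), ⟨hξβ, hβ, hξ⟩, rfl⟩

theorem ChangProperty.exists_typeBoundedOn (hκ : ChangProperty.{v, v} κ) (hf : OmegaBounded f κ) :
    ∃ A : Set Ordinal, A ⊆ Iio κ ∧ HasOType A (ℵ_ 1).ord ∧ TypeBoundedOn f A (ℵ_ 1).ord := by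
  have htype (α β : Ordinal) (hβ : β < κ) :
      ∃ γ < (ℵ_ 1).ord, OTypeLE {ξ | ξ < β ∧ f ξ β = f α β} γ :=
    exists_lt_ord_aleph_one_otypeLE (hf.countable_colorClass hβ (f α β))
  choose! otp hotp_lt hotp using htype
  obtain ⟨A, hAκ, hA, hcount⟩ := hκ otp fun α β _ hβ ↦ hotp_lt α β hβ
  obtain ⟨γ, hγ, hγ_le⟩ := exists_lt_ord_aleph_one_mem_upperBounds hcount <| by
    rintro _ ⟨α, -, β, hβ, -, rfl⟩
    exact hotp_lt α β (hAκ hβ)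
  refine ⟨A, hAκ, hA, γ, hγ, fun α hα β hβ hαβ ↦ ?_⟩
  have hle : otp α β ≤ γ := hγ_le ⟨α, hα, β, hβ, hαβ, rfl⟩
  exact (hotp α β (hAκ hβ)).of_strictMonoOn (Ordinal.lift_le.2 hle) strictMonoOn_id
    fun ξ hξ ↦ hξ.2

section Pullback

variable {θ : Ordinal.{v₂}} {H : Ordinal.{v₂} → Ordinal.{v}} {code : Ordinal.{w} → Ordinal.{w₂}}

theorem IsNormalColoring.comp (hf : IsNormalColoring f κ) (hA : A ⊆ Iio κ)
    (hH : StrictMonoOn H (Iio θ)) (hHA : MapsTo H (Iio θ) A) (hcode : InjOn code (image2 f A A)) :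
    IsNormalColoring (fun α β ↦ code (f (H α) (H β))) θ := by
  intro α β γ δ hαβ hβ hγδ hδ h
  have hα : α < θ := hαβ.trans hβ
  have hγ : γ < θ := hγδ.trans hδ
  refine hH.injOn hβ hδ (hf _ _ _ _ (hH hα hβ hαβ) (hA (hHA hβ)) (hH hγ hδ hγδ) (hA (hHA hδ)) ?_)
  exact hcode (mem_image2_of_mem (hHA hα) (hHA hβ)) (mem_image2_of_mem (hHA hγ) (hHA hδ)) h

theorem TypeBoundedOn.comp {bd : Ordinal.{v}} {bd' : Ordinal.{v₂}} (hf : TypeBoundedOn f A bd)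
    (hbd : Ordinal.lift.{v₂} bd = Ordinal.lift.{v} bd') (hH : StrictMonoOn H (Iio θ))
    (hHA : MapsTo H (Iio θ) A) (hcode : InjOn code (image2 f A A)) :
    TypeBounded (fun α β ↦ code (f (H α) (H β))) θ bd' := by
  obtain ⟨γ, hγ, hotp⟩ := hf
  have hγ_lt : Ordinal.lift.{v₂} γ < Ordinal.lift.{v} bd' := hbd ▸ Ordinal.lift_lt.2 hγ
  obtain ⟨γ', hγ'⟩ := mem_range_lift_of_le hγ_lt.le
  refine ⟨γ', Ordinal.lift_lt.1 (hγ' ▸ hγ_lt), fun η β hηβ hβ ↦ ?_⟩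
  have hη : η < θ := hηβ.trans hβ
  refine (hotp (H η) (hHA hη) (H β) (hHA hβ) (hH hη hβ hηβ)).of_strictMonoOn hγ'.ge
    (hH.mono fun ξ hξ ↦ hξ.1.trans hβ) fun ξ ⟨hξβ, hξ⟩ ↦ ?_
  have hξθ : ξ < θ := hξβ.trans hβ
  exact ⟨hHA hξθ, hH hξθ hβ hξβ,
    hcode (mem_image2_of_mem (hHA hξθ) (hHA hβ)) (mem_image2_of_mem (hHA hη) (hHA hβ)) hξ⟩

theorem IsRainbow.image {B : Set Ordinal.{v₂}}
    (hB : IsRainbow (fun α β ↦ code (f (H α) (H β))) B) (hH : StrictMonoOn H B) :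
    IsRainbow f (H '' B) := by
  rintro _ ⟨α, hα, rfl⟩ _ ⟨β, hβ, rfl⟩ _ ⟨γ, hγ, rfl⟩ _ ⟨δ, hδ, rfl⟩ hαβ hγδ h
  obtain ⟨rfl, rfl⟩ := hB α hα β hβ γ hγ δ hδ ((hH.lt_iff_lt hα hβ).1 hαβ)
    ((hH.lt_iff_lt hγ hδ).1 hγδ) (congrArg code h)
  exact ⟨rfl, rfl⟩

end Pullback

theorem TypeBoundedPolyArrow.exists_isRainbow_subset {θ : Ordinal.{v₂}} {θ' : Ordinal.{v}}
    (h : TypeBoundedPolyArrow.{v₂, w₂} (ℵ_ 1).ord θ (ℵ_ 1).ord (ℵ_ 1).ord)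
    (hθ : Ordinal.lift.{v} θ = Ordinal.lift.{v₂} θ') (hA : HasOType A (ℵ_ 1).ord) (hAκ : A ⊆ Iio κ)
    (hf : IsNormalColoring f κ) (hfA : TypeBoundedOn f A (ℵ_ 1).ord) :
    ∃ B : Set Ordinal, B ⊆ A ∧ HasOType B θ' ∧ IsRainbow f B := by
  obtain ⟨H, hH, hHA⟩ := hA.exists_strictMonoOn_mapsTo (θ' := (ℵ_ 1 : Cardinal.{v₂}).ord) (by simp)
  have hAcard : #A = ℵ_ 1 := by simp [hA.mk_eq]
  have hcolors : #(image2 f A A) ≤ ℵ_ 1 := by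
    have hle := lift_mk_image2_self_le f (hAcard ▸ aleph0_le_aleph 1)
    rwa [hAcard, lift_aleph, Ordinal.lift_one, lift_le_aleph_one] at hle
  obtain ⟨code, hcode, hcode_lt⟩ := exists_injOn_mapsTo_Iio_ord (c := ℵ_ 1) (by simpa)
  obtain ⟨B, hBω, hB, hBr⟩ := h (fun α β ↦ code (f (H α) (H β)))
    (fun α β hαβ hβ ↦ hcode_lt (mem_image2_of_mem (hHA (hαβ.trans hβ)) (hHA hβ)))
    (hf.comp hAκ hH hHA hcode) (hfA.comp (by simp) hH hHA hcode)
  have hHB : StrictMonoOn H B := hH.mono hBω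
  exact ⟨H '' B, (hHA.mono_left hBω).image_subset, hB.image hθ hHB, hBr.image hHB⟩

end Coloring

theorem stmt7_general {κ θ' : Ordinal.{v}} {θ : Ordinal.{v₂}} (hκ : ChangProperty.{v, v} κ)
    (hpoly : TypeBoundedPolyArrow.{v₂, w₂} (ℵ_ 1).ord θ (ℵ_ 1).ord (ℵ_ 1).ord)
    (hθ : Ordinal.lift.{v} θ = Ordinal.lift.{v₂} θ') {f : Ordinal.{v} → Ordinal.{v} → Ordinal.{w}}
    (hf : IsNormalColoring f κ) (hbdd : OmegaBounded f κ) :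
    ∃ A : Set Ordinal, A ⊆ Iio κ ∧ HasOType A θ' ∧ IsRainbow f A := by
  obtain ⟨A, hAκ, hA, hfA⟩ := hκ.exists_typeBoundedOn hbdd
  obtain ⟨B, hBA, hB, hBr⟩ := hpoly.exists_isRainbow_subset hθ hA hAκ hf hfA
  exact ⟨B, hBA.trans hAκ, hB, hBr⟩

/-- Corollary (Changvanilla): if every `f : [ω₂]² → ω₁` has a subset of order type `ω₁`
with countable color image (a consequence of Chang's Conjecture), and
`ω₁ →^poly (ω₁)²_{<ω₁-t-bdd}` holds, then `ω₂ →^poly (ω₁)²_{ω-bdd}`. -/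
theorem stmt7
    (hcc : ∀ f : Ordinal → Ordinal → Ordinal,
      (∀ α β : Ordinal, α < β → β < (Cardinal.aleph 2).ord → f α β < (Cardinal.aleph 1).ord) →
      ∃ A : Set Ordinal, A ⊆ Set.Iio (Cardinal.aleph 2).ord ∧
        HasOType A (Cardinal.aleph 1).ord ∧
        {ξ : Ordinal | ∃ α ∈ A, ∃ β ∈ A, α < β ∧ f α β = ξ}.Countable)
    (hpoly : ∀ f : Ordinal → Ordinal → Ordinal,
      (∀ α β : Ordinal, α < β → β < (Cardinal.aleph 1).ord → f α β < (Cardinal.aleph 1).ord) →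
      IsNormalColoring f (Cardinal.aleph 1).ord →
      TypeBounded f (Cardinal.aleph 1).ord (Cardinal.aleph 1).ord →
      ∃ A : Set Ordinal, A ⊆ Set.Iio (Cardinal.aleph 1).ord ∧
        HasOType A (Cardinal.aleph 1).ord ∧ IsRainbow f A) :
    ∀ f : Ordinal → Ordinal → Ordinal,
      (∀ α β : Ordinal, α < β → β < (Cardinal.aleph 2).ord → f α β < (Cardinal.aleph 2).ord) →
      IsNormalColoring f (Cardinal.aleph 2).ord → OmegaBounded f (Cardinal.aleph 2).ord →
      ∃ A : Set Ordinal, A ⊆ Set.Iio (Cardinal.aleph 2).ord ∧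
        HasOType A (Cardinal.aleph 1).ord ∧ IsRainbow f A := by
  intro f _ hnorm hbdd
  exact stmt7_general (ChangProperty.of_lift_eq hcc (by simp)) hpoly (by simp) hnorm hbdd
end

section
/- If the principle (*) holds, then ω₂ ↛^poly (ω₁-st)²_{ω-bdd}: there exists a normal ω-bounded coloring f:[ω₂]²→ω₂ such that no A⊆ω₂ of order type ω₁ that is stationary in sup A is f-rainbow. -/
open Set Cardinal Ordinal

universe u

/-- The principle `(*)`: there is a sequence `⟨S_α : α ∈ S^{ω₂}_ω⟩` of countable
`S_α ⊆ α` such that for every `β ∈ S^{ω₂}_{ω₁}` there is a club `c ⊆ β` of ordinals of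
countable cofinality with `c ∩ α ⊆ S_α` for every `α ∈ c`. -/
def StarPrinciple : Prop :=
  ∃ S : Ordinal.{0} → Set Ordinal.{0},
    (∀ α : Ordinal, α < (Cardinal.aleph 2).ord → α.cof = ℵ₀ →
      S α ⊆ Set.Iio α ∧ (S α).Countable) ∧
    ∀ β : Ordinal, β < (Cardinal.aleph 2).ord → β.cof = Cardinal.aleph 1 →
      ∃ c : Set Ordinal, IsClubIn c β ∧ (∀ α ∈ c, α.cof = ℵ₀) ∧
        ∀ α ∈ c, c ∩ Set.Iio α ⊆ S α

/-! Let `S` be the sequence of countable sets provided by `(*)`. Color a pair `α < β` by a code for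
`(α, β)`, except that for fixed `β` all `α ∈ S β` receive the same color. As the sets `S β` are
countable, this coloring is normal and `ω`-bounded. If `A` is stationary in some `δ` of cofinality
`ω₁`, then `A` meets the club that `(*)` provides at `δ` in three points `x < y < z`; both `x` and
`y` lie in `S z`, so `{x, z}` and `{y, z}` have the same color. -/

universe v

section Club

variable {c A : Set Ordinal.{u}} {δ x : Ordinal.{u}}

theorem sSup_inter_Iio_eq_iff : sSup (c ∩ Iio δ) = δ ↔ ∀ b < δ, ∃ y ∈ c, b < y ∧ y < δ := by
  have hbdd : BddAbove (c ∩ Iio δ) := bddAbove_Iio.mono inter_subset_right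
  have hle : sSup (c ∩ Iio δ) ≤ δ := csSup_le' fun y hy => hy.2.le
  rw [← hle.ge_iff_eq, ← forall_lt_iff_le]
  simp only [lt_csSup_iff' hbdd, mem_inter_iff, mem_Iio, and_assoc, and_comm]

theorem IsClubIn.inter_Ioi (hc : IsClubIn c δ) (hδ : Order.IsSuccLimit δ) (hx : x < δ) :
    IsClubIn (c ∩ Ioi x) δ := by
  obtain ⟨hsub, hunbdd, hclosed⟩ := hc
  refine ⟨inter_subset_left.trans hsub, fun α hα => ?_, fun α hα hα₀ hsup => ?_⟩
  · obtain ⟨β, hβ, hle⟩ := hunbdd _ (hδ.succ_lt (max_lt hα hx))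
    have hlt : max α x < β := Order.succ_le_iff.1 hle
    exact ⟨β, ⟨hβ, (le_max_right _ _).trans_lt hlt⟩, (le_max_left _ _).trans hlt.le⟩
  · rw [sSup_inter_Iio_eq_iff] at hsup
    obtain ⟨y, hy, -, hyα⟩ := hsup 0 (pos_iff_ne_zero.2 hα₀)
    refine ⟨hclosed α hα hα₀ (sSup_inter_Iio_eq_iff.2 fun b hb => ?_), hy.2.trans hyα⟩
    obtain ⟨z, hz, hbz⟩ := hsup b hb
    exact ⟨z, hz.1, hbz⟩

theorem IsStationaryIn.exists_mem_inter_gt (hA : IsStationaryIn A δ) (hc : IsClubIn c δ)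
    (hδ : Order.IsSuccLimit δ) (hx : x < δ) : ∃ y ∈ A, y ∈ c ∧ x < y := by
  obtain ⟨y, hyA, hyc, hxy⟩ := hA _ (hc.inter_Ioi hδ hx)
  exact ⟨y, hyA, hyc, hxy⟩

theorem IsClubIn.image_lift (hc : IsClubIn c δ) :
    IsClubIn (Ordinal.lift.{v} '' c) (Ordinal.lift.{v} δ) := by
  obtain ⟨hsub, hunbdd, hclosed⟩ := hc
  refine ⟨?_, fun α hα => ?_, fun α hα hα₀ hsup => ?_⟩
  · rintro _ ⟨y, hy, rfl⟩
    exact Ordinal.lift_lt.2 (hsub hy)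
  · obtain ⟨α, rfl⟩ := Ordinal.mem_range_lift_of_le hα.le
    obtain ⟨β, hβ, hle⟩ := hunbdd α (Ordinal.lift_lt.1 hα)
    exact ⟨_, mem_image_of_mem _ hβ, Ordinal.lift_le.2 hle⟩
  · obtain ⟨α, rfl⟩ := Ordinal.mem_range_lift_of_le hα.le
    have hα₀' : α ≠ 0 := by rintro rfl; simp at hα₀
    refine mem_image_of_mem _ (hclosed α (Ordinal.lift_lt.1 hα) hα₀' ?_)
    rw [sSup_inter_Iio_eq_iff] at hsup ⊢
    intro b hb
    obtain ⟨_, ⟨y, hy, rfl⟩, hby, hyα⟩ := hsup _ (Ordinal.lift_lt.2 hb)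
    exact ⟨y, hy, Ordinal.lift_lt.1 hby, Ordinal.lift_lt.1 hyα⟩

end Club

section Capture

/-- `S` captures a club of `δ`: some club `c` of `δ` satisfies `c ∩ α ⊆ S α` for all `α ∈ c`. This
is what `(*)` provides at the ordinals of cofinality `ω₁`; the requirement that `c` consists of
ordinals of countable cofinality is left out. -/
def CapturesClub (S : Ordinal.{u} → Set Ordinal.{u}) (δ : Ordinal.{u}) : Prop :=
  ∃ c, IsClubIn c δ ∧ ∀ α ∈ c, c ∩ Iio α ⊆ S α

variable {S : Ordinal.{u} → Set Ordinal.{u}} {A : Set Ordinal.{u}} {δ : Ordinal.{u}}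

theorem IsStationaryIn.exists_lt_lt_of_capturesClub (hA : IsStationaryIn A δ)
    (hδ : Order.IsSuccLimit δ) (hS : CapturesClub S δ) :
    ∃ x ∈ A, ∃ y ∈ A, ∃ z ∈ A, x < y ∧ y < z ∧ x ∈ S z ∧ y ∈ S z := by
  obtain ⟨c, hc, hcS⟩ := hS
  obtain ⟨x, hxA, hxc⟩ := hA c hc
  obtain ⟨y, hyA, hyc, hxy⟩ := hA.exists_mem_inter_gt hc hδ (hc.1 hxc)
  obtain ⟨z, hzA, hzc, hyz⟩ := hA.exists_mem_inter_gt hc hδ (hc.1 hyc)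
  exact ⟨x, hxA, y, hyA, z, hzA, hxy, hyz, hcS z hzc ⟨hxc, hxy.trans hyz⟩, hcS z hzc ⟨hyc, hyz⟩⟩

/-- The transfer of a sequence of sets of ordinals to a larger universe; its entries at ordinals
that do not come from the smaller universe are empty. -/
noncomputable def liftSeq (S : Ordinal.{u} → Set Ordinal.{u}) :
    Ordinal.{max u v} → Set Ordinal.{max u v} :=
  Function.extend Ordinal.lift.{v} (fun α => Ordinal.lift.{v} '' S α) fun _ => ∅

theorem liftSeq_lift (S : Ordinal.{u} → Set Ordinal.{u}) (α : Ordinal.{u}) :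
    liftSeq.{u, v} S (Ordinal.lift.{v} α) = Ordinal.lift.{v} '' S α :=
  Function.Injective.extend_apply (fun _ _ => Ordinal.lift_inj.1) _ _ α

theorem countable_liftSeq (hS : ∀ α, (S α).Countable) (α : Ordinal.{max u v}) :
    (liftSeq.{u, v} S α).Countable := by
  by_cases hα : ∃ α₀, Ordinal.lift.{v} α₀ = α
  · obtain ⟨α₀, rfl⟩ := hα
    rw [liftSeq_lift]
    exact (hS α₀).image _
  · rw [liftSeq, Function.extend_apply' _ _ _ hα]
    exact countable_empty

theorem CapturesClub.liftSeq (hS : CapturesClub S δ) :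
    CapturesClub (liftSeq.{u, v} S) (Ordinal.lift.{v} δ) := by
  obtain ⟨c, hc, hcS⟩ := hS
  refine ⟨_, hc.image_lift, ?_⟩
  rintro _ ⟨α, hα, rfl⟩ _ ⟨⟨β, hβ, rfl⟩, hβα⟩
  rw [liftSeq_lift]
  exact mem_image_of_mem _ (hcS α hα ⟨hβ, Ordinal.lift_lt.1 hβα⟩)

theorem StarPrinciple.exists_countable_capturesClub (hstar : StarPrinciple) :
    ∃ S : Ordinal.{0} → Set Ordinal.{0}, (∀ α, (S α).Countable) ∧
      ∀ δ < (ℵ_ 2).ord, δ.cof = ℵ_ 1 → CapturesClub S δ := by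
  obtain ⟨S, hS, hclub⟩ := hstar
  refine ⟨fun α => {x ∈ S α | α < (ℵ_ 2).ord ∧ α.cof = ℵ₀}, fun α => ?_, fun δ hδ hcof => ?_⟩
  · by_cases hα : α < (ℵ_ 2).ord ∧ α.cof = ℵ₀
    · exact (hS α hα.1 hα.2).2.mono (sep_subset _ _)
    · exact countable_empty.mono fun x hx => hα hx.2
  · obtain ⟨c, hc, hcof, hcS⟩ := hclub δ hδ hcof
    exact ⟨c, hc, fun α hα β hβ => ⟨hcS α hα hβ, (hc.1 hα).trans hδ, hcof α hα⟩⟩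

theorem StarPrinciple.exists_countable_capturesClub_lift (hstar : StarPrinciple) :
    ∃ S : Ordinal.{u} → Set Ordinal.{u}, (∀ α, (S α).Countable) ∧
      ∀ δ < (ℵ_ 2).ord, δ.cof = ℵ_ 1 → CapturesClub S δ := by
  obtain ⟨S, hS, hcap⟩ := hstar.exists_countable_capturesClub
  refine ⟨liftSeq S, countable_liftSeq hS, fun δ hδ hcof => ?_⟩
  have hω₂ : Ordinal.lift.{u} (ℵ_ 2 : Cardinal.{0}).ord = (ℵ_ 2).ord := by simp
  rw [← hω₂] at hδ
  obtain ⟨δ, rfl⟩ := Ordinal.mem_range_lift_of_le hδ.le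
  refine (hcap δ (Ordinal.lift_lt.1 hδ) (Cardinal.lift_injective.{u} ?_)).liftSeq
  rw [Ordinal.lift_cof, hcof, Cardinal.lift_aleph, Ordinal.lift_one]

end Capture

section Coloring

open scoped Classical in
/-- The map on ordinals that identifies all elements of `s` with each other, and nothing else, by
sending them to the least one. -/
noncomputable def collapseOn (s : Set Ordinal.{u}) (α : Ordinal.{u}) : Ordinal.{u} :=
  if α ∈ s then sInf s else α

theorem collapseOn_of_mem {s : Set Ordinal.{u}} {α : Ordinal.{u}} (hα : α ∈ s) :
    collapseOn s α = sInf s :=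
  if_pos hα

theorem collapseOn_le (s : Set Ordinal.{u}) (α : Ordinal.{u}) : collapseOn s α ≤ α := by
  rw [collapseOn]
  split_ifs with hα
  exacts [csInf_le' hα, le_rfl]

theorem collapseOn_preimage_singleton_subset (s : Set Ordinal.{u}) (ξ : Ordinal.{u}) :
    collapseOn s ⁻¹' {ξ} ⊆ insert ξ s := by
  intro α hα
  by_cases hs : α ∈ s
  · exact .inr hs
  · exact .inl (by simpa only [mem_preimage, collapseOn, if_neg hs, mem_singleton_iff] using hα)

/-- The coloring of pairs of ordinals, with colors taken from the coding function `P`, that gives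
the same color to `{α, γ}` and `{β, γ}` whenever `α` and `β` are below `γ` and belong to `S γ`. -/
noncomputable def collapseColoring (P : Ordinal.{u} × Ordinal.{u} → Ordinal.{v})
    (S : Ordinal.{u} → Set Ordinal.{u}) (α β : Ordinal.{u}) : Ordinal.{v} :=
  P (collapseOn (S β) α, β)

variable {P : Ordinal.{u} × Ordinal.{u} → Ordinal.{v}} {S : Ordinal.{u} → Set Ordinal.{u}}
  {κ α β : Ordinal.{u}}

theorem mk_collapseOn_mem_prod_Iio (hαβ : α < β) (hβ : β < κ) :
    (collapseOn (S β) α, β) ∈ Iio κ ×ˢ Iio κ :=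
  ⟨(collapseOn_le _ _).trans_lt (hαβ.trans hβ), hβ⟩

theorem collapseColoring_lt {μ : Ordinal.{v}} (hP : MapsTo P (Iio κ ×ˢ Iio κ) (Iio μ))
    (hαβ : α < β) (hβ : β < κ) : collapseColoring P S α β < μ :=
  hP (mk_collapseOn_mem_prod_Iio hαβ hβ)

theorem isNormalColoring_collapseColoring (hP : InjOn P (Iio κ ×ˢ Iio κ)) :
    IsNormalColoring (collapseColoring P S) κ := fun _ _ _ _ hαβ hβ hγδ hδ h =>
  congrArg Prod.snd <| hP (mk_collapseOn_mem_prod_Iio hαβ hβ) (mk_collapseOn_mem_prod_Iio hγδ hδ) h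

theorem omegaBounded_collapseColoring (hP : InjOn P (Iio κ ×ˢ Iio κ))
    (hS : ∀ β < κ, (S β).Countable) : OmegaBounded (collapseColoring P S) κ := by
  intro ξ
  obtain hempty | ⟨⟨γ, δ⟩, hγδ, hδ, hξ⟩ := Set.eq_empty_or_nonempty
    {p : Ordinal × Ordinal | p.1 < p.2 ∧ p.2 < κ ∧ collapseColoring P S p.1 p.2 = ξ}
  · exact hempty ▸ countable_empty
  have hfiber : (collapseOn (S δ) ⁻¹' {collapseOn (S δ) γ}).Countable :=
    ((hS δ hδ).insert _).mono (collapseOn_preimage_singleton_subset _ _)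
  refine (hfiber.image (·, δ)).mono ?_
  rintro ⟨α, β⟩ ⟨hαβ, hβ, hξ'⟩
  obtain ⟨hα, rfl⟩ := Prod.mk_inj.1 <|
    hP (mk_collapseOn_mem_prod_Iio hαβ hβ) (mk_collapseOn_mem_prod_Iio hγδ hδ) (hξ'.trans hξ.symm)
  exact mem_image_of_mem _ hα

theorem not_isRainbow_collapseColoring {A : Set Ordinal.{u}} {x y z : Ordinal.{u}} (hx : x ∈ A)
    (hy : y ∈ A) (hz : z ∈ A) (hxy : x < y) (hyz : y < z) (hxS : x ∈ S z) (hyS : y ∈ S z) :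
    ¬ IsRainbow (collapseColoring P S) A := by
  intro hA
  have hcolor : collapseColoring P S x z = collapseColoring P S y z := by
    simp only [collapseColoring, collapseOn_of_mem hxS, collapseOn_of_mem hyS]
  exact hxy.ne (hA x hx z hz y hy z hz (hxy.trans hyz) hyz hcolor).1

end Coloring

section Pairing

theorem exists_mapsTo_injOn_of_lift_mk_le {α : Type u} {β : Type v} [Nonempty β] {s : Set α}
    {t : Set β} (h : Cardinal.lift.{v} #s ≤ Cardinal.lift.{u} #t) :
    ∃ f : α → β, MapsTo f s t ∧ InjOn f s := by
  obtain ⟨e⟩ := Cardinal.lift_mk_le'.1 h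
  let f : α → β := Function.extend (↑) (fun x : s => (e x : β)) fun _ => Classical.arbitrary β
  have hf (x : s) : f x = e x := Subtype.val_injective.extend_apply _ _ x
  refine ⟨f, fun x hx => hf ⟨x, hx⟩ ▸ (e ⟨x, hx⟩).2, fun x hx y hy hxy => ?_⟩
  rw [hf ⟨x, hx⟩, hf ⟨y, hy⟩] at hxy
  exact congrArg Subtype.val (e.injective (Subtype.ext hxy))

theorem exists_mapsTo_injOn_prod_Iio_ord {κ : Cardinal.{u}} {μ : Cardinal.{v}} (hκ : ℵ₀ ≤ κ)
    (hκμ : Cardinal.lift.{v} κ ≤ Cardinal.lift.{u} μ) :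
    ∃ P : Ordinal.{u} × Ordinal.{u} → Ordinal.{v},
      MapsTo P (Iio κ.ord ×ˢ Iio κ.ord) (Iio μ.ord) ∧ InjOn P (Iio κ.ord ×ˢ Iio κ.ord) := by
  apply exists_mapsTo_injOn_of_lift_mk_le
  have hprod : #(Iio κ.ord ×ˢ Iio κ.ord : Set (Ordinal.{u} × Ordinal.{u})) =
      Cardinal.lift.{u + 1} κ := by
    rw [Cardinal.mk_setProd, Cardinal.mk_Iio_ordinal, Cardinal.card_ord, ← Cardinal.lift_mul,
      Cardinal.mul_eq_self hκ]
  rw [hprod, Cardinal.mk_Iio_ordinal, Cardinal.card_ord]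
  simpa using Cardinal.lift_le.{max (u + 1) (v + 1)}.2 hκμ

end Pairing

theorem HasOType.cof_sSup {A : Set Ordinal.{u}} {θ : Ordinal.{u}} (hA : HasOType A θ)
    (hθ : Order.IsSuccPrelimit θ) : (sSup A).cof = θ.cof := by
  obtain ⟨e⟩ := hA
  have hrange : range (fun i => (e i : Ordinal)) = A := by
    rw [range_comp' Subtype.val e, e.surjective.range_eq, image_univ, Subtype.range_coe]
  have hmono : StrictMono (fun i => (e i : Ordinal)) := fun _ _ hij => e.strictMono hij
  rw [← Ordinal.cof_iSup_Iio hmono hθ, iSup, hrange]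

theorem sSup_lt_of_cof_ne {A : Set Ordinal.{u}} {δ : Ordinal.{u}} (hA : A ⊆ Iio δ)
    (hcof : (sSup A).cof ≠ δ.cof) : sSup A < δ :=
  (csSup_le' fun _ hα => (hA hα).le).lt_of_ne (ne_of_apply_ne cof hcof)

theorem HasOType.cof_sSup_eq_aleph_one {A : Set Ordinal.{u}} (hA : HasOType A (ℵ_ 1).ord) :
    (sSup A).cof = ℵ_ 1 := by
  rw [hA.cof_sSup (isSuccLimit_ord (aleph0_le_aleph 1)).isSuccPrelimit,
    isRegular_aleph_one.cof_ord]

theorem sSup_lt_ord_aleph_two {A : Set Ordinal.{u}} (hA : A ⊆ Iio (ℵ_ 2).ord)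
    (hcof : (sSup A).cof = ℵ_ 1) : sSup A < (ℵ_ 2).ord := by
  have hω₂ : (ℵ_ 2 : Cardinal.{u}).ord.cof = ℵ_ 2 := by
    rw [← one_add_one_eq_two, (isRegular_aleph_add_one 1).cof_ord]
  refine sSup_lt_of_cof_ne hA ?_
  rw [hcof, hω₂]
  exact (aleph_lt_aleph.2 one_lt_two).ne

theorem stmt10_general (hstar : StarPrinciple) :
    ∃ f : Ordinal.{u} → Ordinal.{u} → Ordinal.{v},
      (∀ α β : Ordinal, α < β → β < (ℵ_ 2).ord → f α β < (ℵ_ 2).ord) ∧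
      IsNormalColoring f (ℵ_ 2).ord ∧
      OmegaBounded f (ℵ_ 2).ord ∧
      ∀ δ < (ℵ_ 2).ord, δ.cof = ℵ_ 1 → ∀ A, IsStationaryIn A δ → ¬ IsRainbow f A := by
  obtain ⟨S, hS, hcap⟩ := hstar.exists_countable_capturesClub_lift
  obtain ⟨P, hPmaps, hPinj⟩ := exists_mapsTo_injOn_prod_Iio_ord
    (κ := ℵ_ 2) (μ := ℵ_ 2) (aleph0_le_aleph 2) (by simp)
  refine ⟨collapseColoring P S, fun α β => collapseColoring_lt hPmaps,
    isNormalColoring_collapseColoring hPinj,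
    omegaBounded_collapseColoring hPinj fun β _ => hS β, fun δ hδ hcof A hA => ?_⟩
  have hlim : Order.IsSuccLimit δ :=
    one_lt_cof_iff.1 (hcof ▸ one_lt_aleph0.trans_le (aleph0_le_aleph 1))
  obtain ⟨x, hx, y, hy, z, hz, hxy, hyz, hxS, hyS⟩ :=
    hA.exists_lt_lt_of_capturesClub hlim (hcap δ hδ hcof)
  exact not_isRainbow_collapseColoring hx hy hz hxy hyz hxS hyS

/-- Claim (clmstar): `(*)` implies `ω₂ ↛^poly (ω₁-st)²_{ω-bdd}`: there is a normal
`ω`-bounded coloring on `[ω₂]²` such that no subset of `ω₂` of order type `ω₁` which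
is stationary in its supremum is rainbow. -/
theorem stmt10 (hstar : StarPrinciple) :
    ∃ f : Ordinal → Ordinal → Ordinal,
      (∀ α β : Ordinal, α < β → β < (Cardinal.aleph 2).ord → f α β < (Cardinal.aleph 2).ord) ∧
      IsNormalColoring f (Cardinal.aleph 2).ord ∧
      OmegaBounded f (Cardinal.aleph 2).ord ∧
      ∀ A : Set Ordinal, A ⊆ Set.Iio (Cardinal.aleph 2).ord →
        HasOType A (Cardinal.aleph 1).ord → IsStationaryIn A (sSup A) →
        ¬ IsRainbow f A := by
  obtain ⟨f, hlt, hnormal, hbdd, hf⟩ := stmt10_general hstar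
  exact ⟨f, hlt, hnormal, hbdd, fun A hA hotype => hf _
    (sSup_lt_ord_aleph_two hA hotype.cof_sSup_eq_aleph_one) hotype.cof_sSup_eq_aleph_one A⟩
end

section
/- Let f:[ω₂]²→ω₂ be a <ω-bounded coloring and let C₀⊆ω₂ be a closed f-rainbow set of order type ω₁. Then for every ordinal β with sup C₀ ≤ β < ω₂ there exists a set D⊆C₀, closed and cofinal in sup C₀, such that the map η ↦ f(η,β) is injective on D. -/
open Set Cardinal Ordinal

universe u

/-!
Call `a` a closure point of `h` if `h x < a` for every `x < a`. In a well-order of uncountable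
cofinality the closure points of `h` form a club as soon as `h` maps initial segments to bounded
sets: iterating a strict upper bound `ω` times and taking the supremum yields one above any given
point. Now let `h x` bound the fiber of `g` through `x`. If `a < b` are closure points with
`g a = g b`, then `b ≤ h a < b`, which is absurd; so `g` is injective on a club. Since `C₀` is
closed, a club of the well-order `C₀` is a closed set of ordinals.
-/

section WellOrder

variable {α : Type*} [LinearOrder α]

/-- The closure points of a self-map `h` of an order, i.e. the points `a` whose initial segment
`Iio a` is mapped into itself by `h`. They provide the club on which a coloring is injective. -/
def closurePoints (h : α → α) : Set α :=
  {a | ∀ x < a, h x < a}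

theorem dirSupClosed_closurePoints (h : α → α) : DirSupClosed (closurePoints h) := by
  intro d hd _ _ a ha x hx
  obtain ⟨b, hb, hxb⟩ := (lt_isLUB_iff ha).1 hx
  exact (hd hb x hxb).trans_le (ha.1 hb)

theorem injOn_closurePoints {γ : Type*} {g : α → γ} {h : α → α}
    (hgh : ∀ x y, g x = g y → x ≤ h y) : InjOn g (closurePoints h) := by
  intro a ha b hb hab
  apply le_antisymm <;> by_contra! hlt
  · exact (hgh a b hab).not_gt (ha b hlt)
  · exact (hgh b a hab.symm).not_gt (hb a hlt)

theorem bddAbove_of_mk_lt_cof {s : Set α} (hs : #s < Order.cof α) : BddAbove s :=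
  .of_not_isCofinal fun h ↦ (Order.cof_le h).not_gt hs

theorem noMaxOrder_of_one_lt_cof (hα : 1 < Order.cof α) : NoMaxOrder α := by
  have : Nonempty α := Order.cof_ne_zero_iff.1 (zero_lt_one.trans hα).ne'
  exact noTopOrder_iff_noMaxOrder α |>.1 (Order.one_lt_cof_iff.1 hα)

variable [WellFoundedLT α]

theorem exists_isLUB_of_bddAbove {s : Set α} (hs : BddAbove s) : ∃ a, IsLUB s a := by
  obtain ⟨a, ha, hmin⟩ := wellFounded_lt.has_min (upperBounds s) hs
  exact ⟨a, ha, fun b hb ↦ not_lt.1 (hmin b hb)⟩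

theorem isClub_closurePoints (hα : ℵ₀ < Order.cof α) {h : α → α}
    (hh : ∀ a, BddAbove (h '' Iio a)) : IsClub (closurePoints h) := by
  refine ⟨dirSupClosed_closurePoints h, fun a ↦ ?_⟩
  have := noMaxOrder_of_one_lt_cof (one_lt_aleph0.trans hα)
  have exists_next (b : α) : ∃ c, ∀ x < b, h x < c := by
    obtain ⟨m, hm⟩ := hh b
    obtain ⟨c, hmc⟩ := exists_gt m
    exact ⟨c, fun x hx ↦ (hm (mem_image_of_mem h hx)).trans_lt hmc⟩
  choose next apply_lt_next using exists_next
  let s (n : ℕ) : α := next^[n] a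
  have s_succ (n : ℕ) : s (n + 1) = next (s n) := Function.iterate_succ_apply' ..
  have range_bddAbove : BddAbove (range s) :=
    bddAbove_of_mk_lt_cof ((le_aleph0_iff_set_countable.2 (countable_range s)).trans_lt hα)
  obtain ⟨b, hb⟩ := exists_isLUB_of_bddAbove range_bddAbove
  refine ⟨b, fun x hx ↦ ?_, hb.1 ⟨0, rfl⟩⟩
  obtain ⟨_, ⟨n, rfl⟩, hxn⟩ := (lt_isLUB_iff hb).1 hx
  calc h x < next (s n) := apply_lt_next _ _ hxn
    _ = s (n + 1) := (s_succ n).symm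
    _ ≤ b := hb.1 ⟨n + 1, rfl⟩

variable [IsRegularCardinalOrder α]

theorem mk_Iio_lt_mk (a : α) : #(Iio a) < #α := by
  have := typein_lt_type (α := α) (· < ·) a
  rwa [← ord_cardinalMk, lt_ord, card_typein] at this

theorem exists_isClub_injOn (hα : ℵ₀ < #α) {γ : Type*} {g : α → γ}
    (hg : ∀ c, #(g ⁻¹' {c}) < #α) : ∃ D : Set α, IsClub D ∧ InjOn g D := by
  simp only [← Order.cof_eq_cardinalMk (α := α)] at hα hg
  choose h hh using fun y ↦ bddAbove_of_mk_lt_cof (hg (g y))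
  refine ⟨closurePoints h, isClub_closurePoints hα fun a ↦ bddAbove_of_mk_lt_cof ?_,
    injOn_closurePoints fun x y hxy ↦ hh y hxy⟩
  exact mk_image_le.trans_lt ((mk_Iio_lt_mk a).trans_eq Order.cof_eq_cardinalMk.symm)

end WellOrder

theorem exists_mem_image_val_ge_of_lt_sSup {α : Type*} [ConditionallyCompleteLinearOrderBot α]
    {C : Set α} {D : Set C} (hD : IsCofinal D) {a : α} (ha : a < sSup C) :
    ∃ x ∈ Subtype.val '' D, a ≤ x := by
  obtain ⟨c, hc, hac⟩ := exists_lt_of_lt_csSup' ha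
  obtain ⟨d, hd, hcd⟩ := hD ⟨c, hc⟩
  exact ⟨d, mem_image_of_mem _ hd, hac.le.trans hcd⟩

theorem IsClosedSet.image_val {C : Set Ordinal} (hC : IsClosedSet C) (hbdd : BddAbove C)
    {D : Set C} (hD : DirSupClosed D) : IsClosedSet (Subtype.val '' D) := by
  intro α hα h0 hsup
  have hDC : Subtype.val '' D ⊆ C := Subtype.coe_image_subset C D
  have hne : (Subtype.val '' D ∩ Iio α).Nonempty := by
    by_contra! hempty
    simp only [hempty, csSup_empty] at hsup
    exact h0 hsup.symm
  have hlub : IsLUB (Subtype.val '' D ∩ Iio α) α := by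
    simpa only [hsup] using isLUB_csSup hne ⟨α, fun x hx ↦ hx.2.le⟩
  have hαC : α ∈ C := by
    have hlubC : IsLUB (C ∩ Iio α) α :=
      ⟨fun x hx ↦ hx.2.le, fun b hb ↦ hlub.2 fun x hx ↦ hb ⟨hDC hx.1, hx.2⟩⟩
    refine hC α (hα.trans_le (csSup_le_csSup hbdd (hne.mono inter_subset_left) hDC)) h0 ?_
    exact hlubC.csSup_eq (hne.mono (inter_subset_inter_left _ hDC))
  have hlubD : IsLUB (D ∩ Iio ⟨α, hαC⟩) ⟨α, hαC⟩ :=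
    ⟨fun x hx ↦ hx.2.le, fun b hb ↦ hlub.2 <| by
      rintro _ ⟨⟨x, hx, rfl⟩, hxα⟩
      exact hb ⟨hx, hxα⟩⟩
  obtain ⟨_, ⟨x, hx, rfl⟩, hxα⟩ := hne
  exact ⟨_, hD inter_subset_left ⟨x, hx, hxα⟩ (.of_linearOrder _) hlubD, rfl⟩

namespace HasOType

variable {C : Set Ordinal.{u}}

theorem bddAbove {o : Ordinal.{u}} (h : HasOType C o) : BddAbove C := by
  obtain ⟨e⟩ := h
  have : Small.{u} C := small_of_surjective e.surjective
  exact Ordinal.bddAbove_of_small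

theorem mk_eq_s13 {κ : Cardinal.{u}} (h : HasOType C κ.ord) : #C = Cardinal.lift.{u + 1} κ := by
  obtain ⟨e⟩ := h
  rw [← mk_congr e.toEquiv, Cardinal.mk_Iio_ordinal, card_ord]

theorem isRegularCardinalOrder {κ : Cardinal.{u}} (h : HasOType C κ.ord) (hκ : κ.IsRegular) :
    IsRegularCardinalOrder C := by
  obtain ⟨e⟩ := h
  have type_eq : typeLT C = Ordinal.lift.{u + 1} κ.ord := by
    rw [← type_lt_Iio, e.toRelIsoLT.ordinalType_congr]
  have cof_eq : Order.cof C = Cardinal.lift.{u + 1} κ := by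
    rw [← e.cof_congr, Ordinal.cof_Iio, ← Ordinal.lift_cof, hκ.cof_ord]
  exact ⟨by rw [type_eq, cof_eq, lift_ord]⟩

end HasOType

theorem FinBounded.finite_fiber {f : Ordinal → Ordinal → Ordinal} {κ β : Ordinal}
    (hf : FinBounded f κ) {C : Set Ordinal} (hC : β ∈ upperBounds C) (hβ : β < κ) (ξ : Ordinal) :
    {x : C | f x β = ξ}.Finite := by
  refine (((hf ξ).image Prod.fst).insert β |>.preimage Subtype.val_injective.injOn).subset ?_
  exact fun x hx ↦ (hC x.2).eq_or_lt.imp_right fun hlt ↦ ⟨(x, β), ⟨hlt, hβ, hx⟩, rfl⟩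

theorem stmt13_general {κ : Cardinal.{u}} (hκ : κ.IsRegular) (hκ₀ : ℵ₀ < κ)
    {C : Set Ordinal.{u}} (hclosed : IsClosedSet C) (htype : HasOType C κ.ord) {γ : Type*}
    (g : Ordinal → γ) (hg : ∀ ξ, #{x : C | g x = ξ} < Cardinal.lift.{u + 1} κ) :
    ∃ D ⊆ C, IsClosedSet D ∧ (∀ α < sSup C, ∃ x ∈ D, α ≤ x) ∧ InjOn g D := by
  have := htype.isRegularCardinalOrder hκ
  rw [← htype.mk_eq_s13] at hg
  obtain ⟨D, hD, hinj⟩ := exists_isClub_injOn (α := C) (g := g ∘ Subtype.val)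
    (by rwa [htype.mk_eq_s13, aleph0_lt_lift]) hg
  exact ⟨Subtype.val '' D, Subtype.coe_image_subset C D,
    hclosed.image_val htype.bddAbove hD.dirSupClosed,
    fun _ hα ↦ exists_mem_image_val_ge_of_lt_sSup hD.isCofinal hα, hinj.image_of_comp⟩

/-- If `f` is a `<ω`-bounded coloring on `[ω₂]²` and `C₀ ⊆ ω₂` is a closed `f`-rainbow
set of order type `ω₁`, then for every `β` with `sup C₀ ≤ β < ω₂` there is `D ⊆ C₀`,
closed and cofinal in `sup C₀`, on which `η ↦ f η β` is injective. -/
theorem stmt13 (f : Ordinal → Ordinal → Ordinal)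
    (hbd : FinBounded f (Cardinal.aleph 2).ord)
    (C₀ : Set Ordinal) (hsub : C₀ ⊆ Set.Iio (Cardinal.aleph 2).ord)
    (hclosed : IsClosedSet C₀) (hrainbow : IsRainbow f C₀)
    (htype : HasOType C₀ (Cardinal.aleph 1).ord) :
    ∀ β : Ordinal, sSup C₀ ≤ β → β < (Cardinal.aleph 2).ord →
      ∃ D : Set Ordinal, D ⊆ C₀ ∧ IsClosedSet D ∧
        (∀ α : Ordinal, α < sSup C₀ → ∃ x ∈ D, α ≤ x) ∧
        Set.InjOn (fun η => f η β) D := by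
  intro β hβ hβ₂
  have hC₀ : β ∈ upperBounds C₀ := fun η hη ↦ (le_csSup htype.bddAbove hη).trans hβ
  exact stmt13_general isRegular_aleph_one aleph0_lt_aleph_one hclosed htype (f · β) fun ξ ↦
    (hbd.finite_fiber hC₀ hβ₂ ξ).lt_aleph0.trans (by simp)
end
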